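/- arXiv:2006.11420 — 2 statements merged into one kernel-verified Lean document; each statement's English description precedes it below -/
import Mathlib

section
/- Let f, g : ℝ → ℝ be real polynomial functions of the same even degree d ≥ 1. Suppose f has exactly one critical point t₀, with multiplicity k, and g has exactly one critical point s₀, with the same multiplicity k, and that f(t₀) and g(s₀) have the same sign (both positive, both negative, or both zero). Then f and g are Lipschitz equivalent if and only if t₀ and s₀ are either both global minimum points of f and g respectively, or both global maximum points of f and g respectively. -/
open Filter Topology

/-- Two functions `f, g : ℝ → ℝ` are Lipschitz equivalent if there is a bi-Lipschitz
homeomorphism `φ` of `ℝ` and a constant `c > 0` with `g ∘ φ = c·f`. -/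
def LipschitzEquivFun (f g : ℝ → ℝ) : Prop :=
  ∃ φ : ℝ → ℝ, Function.Bijective φ ∧ (∃ K : NNReal, LipschitzWith K φ) ∧
    (∃ K : NNReal, LipschitzWith K (Function.invFun φ)) ∧
    ∃ c : ℝ, 0 < c ∧ ∀ t : ℝ, g (φ t) = c * f t

/-- The multiplicity of a function `f` at `t₀`: the least `k ≥ 1` such that the `k`-th
derivative of `f` at `t₀` is nonzero. -/
noncomputable def multAt (f : ℝ → ℝ) (t₀ : ℝ) : ℕ :=
  sInf {k : ℕ | 1 ≤ k ∧ iteratedDeriv k f t₀ ≠ 0}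

/-!
A polynomial `p` whose unique critical point `t` is a global minimum of order `k` factors as
`p(t) + (x - t) ^ k * U(x)` with `U > 0`. The signed root `σ(x) = (x - t) * U(x) ^ (1 / k)` is a
diffeomorphism of `ℝ` with `p(x) = p(t) + σ(x) ^ k`, and `σ'` is comparable to `U ^ (1 / k)`, whose
size is determined, up to constants, by `k`, `deg p` and the value of `σ`. If `τ` is the signed root
of a second such polynomial `q` of the same degree and order, with minimum point `s`, then `σ'` and
`τ'` are comparable at points where `σ` and `τ` agree, so `τ⁻¹ ∘ σ` is bi-Lipschitz, and it carries
`q - q(s)` to `p - p(t)`. Using `c * U` in place of `U`, where `q(s) = c * p(t)`, gives an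
equivalence between `p` and `q`.

Conversely, a Lipschitz equivalence carries a global extremum to one of the same kind, which can
only be the unique critical point, and a polynomial of positive even degree has a global extremum.
-/

section

open Polynomial
open scoped NNReal

theorem lipschitzWith_symm_comp {σ : ℝ → ℝ} {τ : ℝ ≃o ℝ} {C : ℝ≥0} (hσ : Differentiable ℝ σ)
    (hτ : ∀ y, 0 < deriv τ y) (h : ∀ x y, σ x = τ y → |deriv σ x| ≤ C * deriv τ y) :
    LipschitzWith C (τ.symm ∘ σ) := by
  have hderiv (x : ℝ) :
      HasDerivAt (τ.symm ∘ σ) ((deriv τ (τ.symm (σ x)))⁻¹ * deriv σ x) x := by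
    have hτx := hτ (τ.symm (σ x))
    have hinv : HasDerivAt τ.symm (deriv τ (τ.symm (σ x)))⁻¹ (σ x) :=
      (differentiableAt_of_deriv_ne_zero hτx.ne').hasDerivAt.of_local_left_inverse
        τ.symm.continuous.continuousAt hτx.ne' (.of_forall τ.apply_symm_apply)
    exact hinv.comp x (hσ x).hasDerivAt
  refine lipschitzWith_of_nnnorm_deriv_le (fun x ↦ (hderiv x).differentiableAt) fun x ↦ ?_
  have hτx := hτ (τ.symm (σ x))
  rw [← NNReal.coe_le_coe, coe_nnnorm, (hderiv x).deriv, Real.norm_eq_abs, abs_mul, abs_inv,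
    abs_of_pos hτx, inv_mul_le_iff₀' hτx]
  exact h x _ (τ.apply_symm_apply _).symm

namespace LipschitzEquivFun

variable {f g : ℝ → ℝ}

theorem of_equiv (e : ℝ ≃ ℝ) {K L : ℝ≥0} (he : LipschitzWith K e) (he' : LipschitzWith L e.symm)
    {c : ℝ} (hc : 0 < c) (h : ∀ t, g (e t) = c * f t) : LipschitzEquivFun f g := by
  have hinv : Function.invFun e = e.symm :=
    Function.invFun_eq_of_injective_of_rightInverse e.injective e.apply_symm_apply
  exact ⟨e, e.bijective, ⟨K, he⟩, ⟨L, hinv ▸ he'⟩, c, hc, h⟩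

theorem neg (h : LipschitzEquivFun f g) : LipschitzEquivFun (-f) (-g) := by
  obtain ⟨φ, hφ, hK, hL, c, hc, h⟩ := h
  exact ⟨φ, hφ, hK, hL, c, hc, fun t ↦ by simp [h]⟩

theorem exists_forall_le (h : LipschitzEquivFun f g) {t : ℝ} (ht : ∀ x, f t ≤ f x) :
    ∃ s, ∀ y, g s ≤ g y := by
  obtain ⟨φ, hφ, -, -, c, hc, h⟩ := h
  refine ⟨φ t, fun y ↦ ?_⟩
  obtain ⟨x, rfl⟩ := hφ.surjective y
  rw [h, h]
  exact mul_le_mul_of_nonneg_left (ht x) hc.le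

end LipschitzEquivFun

theorem multAt_neg (f : ℝ → ℝ) (t : ℝ) : multAt (-f) t = multAt f t := by
  simp only [multAt, iteratedDeriv_neg, neg_ne_zero]

theorem neg_fun_eval {R : Type*} [Ring R] (p : R[X]) :
    (-fun x ↦ p.eval x) = fun x ↦ (-p).eval x := by
  funext x
  exact (eval_neg p x).symm

theorem iteratedDeriv_eval {𝕜 : Type*} [NontriviallyNormedField 𝕜] (p : 𝕜[X]) (n : ℕ) :
    iteratedDeriv n (fun x ↦ p.eval x) = fun x ↦ (derivative^[n] p).eval x := by
  induction n with
  | zero => simp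
  | succ n ih =>
    funext x
    rw [iteratedDeriv_succ, ih, Polynomial.deriv, Function.iterate_succ_apply']

theorem multAt_eval {p : ℝ[X]} (hp : p.natDegree ≠ 0) (t : ℝ) :
    multAt (fun x ↦ p.eval x) t = rootMultiplicity t (p - C (p.eval t)) := by
  set q := p - C (p.eval t) with hq
  have hq0 : q ≠ 0 := fun h ↦ hp <| by rw [sub_eq_zero.mp h, natDegree_C]
  have hderiv {n : ℕ} (hn : 1 ≤ n) :
      iteratedDeriv n (fun x ↦ p.eval x) t = (derivative^[n] q).eval t := by
    rw [iteratedDeriv_eval, hq, iterate_derivative_sub, iterate_derivative_C hn, sub_zero]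
  have hroot : 1 ≤ rootMultiplicity t q := (rootMultiplicity_pos hq0).mpr (by simp [hq])
  have hleast : IsLeast {n : ℕ | 1 ≤ n ∧ iteratedDeriv n (fun x ↦ p.eval x) t ≠ 0}
      (rootMultiplicity t q) := by
    refine ⟨⟨hroot, fun h ↦ ?_⟩, fun n ⟨hn, hne⟩ ↦ ?_⟩
    · refine lt_irrefl (rootMultiplicity t q) <|
        (lt_rootMultiplicity_iff_isRoot_iterate_derivative hq0).mpr fun m hm ↦ ?_
      rcases hm.eq_or_lt with rfl | hm
      · rwa [hderiv hroot] at h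
      · exact isRoot_iterate_derivative_of_lt_rootMultiplicity hm
    · by_contra! hlt
      rw [hderiv hn] at hne
      exact hne (isRoot_iterate_derivative_of_lt_rootMultiplicity hlt)
  exact hleast.csInf_eq

theorem exists_norm_eval_le_mul_norm_eval {𝕜 : Type*} [NormedField 𝕜] [ProperSpace 𝕜]
    {P Q : 𝕜[X]} (hQ : ∀ x, Q.eval x ≠ 0) (h : P.natDegree ≤ Q.natDegree) :
    ∃ C : ℝ, 0 < C ∧ ∀ x, ‖P.eval x‖ ≤ C * ‖Q.eval x‖ := by
  have hQ0 : Q ≠ 0 := by rintro rfl; simpa using hQ 0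
  have hratio : (fun x ↦ P.eval x / Q.eval x) =O[cocompact 𝕜] (1 : 𝕜 → ℝ) := by
    have hdeg : P.degree ≤ Q.degree := by
      rw [degree_eq_natDegree hQ0]
      exact degree_le_of_natDegree_le h
    rw [← Metric.cobounded_eq_cocompact]
    refine ((isBigO_cobounded_of_degree_le hdeg).mul
      (Asymptotics.isBigO_refl (fun x ↦ (Q.eval x)⁻¹) _)).congr'
      (.of_forall fun x ↦ (div_eq_mul_inv _ _).symm) (.of_forall fun x ↦ mul_inv_cancel₀ (hQ x))
      |>.trans ?_
    exact Asymptotics.isBigO_const_const _ one_ne_zero _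
  have hcont : Continuous fun x ↦ P.eval x / Q.eval x := P.continuous.div₀ Q.continuous hQ
  obtain ⟨C, hC⟩ := isBounded_iff_forall_norm_le.mp (hcont.isBounded_range_iff_isBigO.mpr hratio)
  refine ⟨max C 1, by positivity, fun x ↦ ?_⟩
  rw [← div_le_iff₀ (norm_pos_iff.mpr (hQ x)), ← norm_div]
  exact (hC _ ⟨x, rfl⟩).trans (le_max_left _ _)

theorem exists_eval_le_mul_eval {P Q : ℝ[X]} (hQ : ∀ x, 0 < Q.eval x)
    (h : P.natDegree ≤ Q.natDegree) : ∃ C : ℝ, 0 < C ∧ ∀ x, P.eval x ≤ C * Q.eval x := by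
  obtain ⟨C, hC, hle⟩ := exists_norm_eval_le_mul_norm_eval (fun x ↦ (hQ x).ne') h
  refine ⟨C, hC, fun x ↦ (Real.le_norm_self _).trans ((hle x).trans_eq ?_)⟩
  rw [Real.norm_of_nonneg (hQ x).le]

theorem natDegree_X_sub_C_pow_mul {R : Type*} [CommRing R] [IsDomain R] (t : R) (k : ℕ) {U : R[X]}
    (hU : U ≠ 0) : ((X - C t) ^ k * U).natDegree = k + U.natDegree := by
  rw [natDegree_mul (pow_ne_zero k (X_sub_C_ne_zero t)) hU, natDegree_pow, natDegree_X_sub_C,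
    mul_one]

/-- The polynomial `W` with `((x - t) ^ k * U)' = (x - t) ^ (k - 1) * W`; it lets one speak of the
sign and size of that derivative after its zero at `t` has been divided out. -/
noncomputable def derivCofactor {R : Type*} [CommRing R] (t : R) (k : ℕ) (U : R[X]) : R[X] :=
  C (k : R) * U + (X - C t) * derivative U

theorem derivative_X_sub_C_pow_mul {R : Type*} [CommRing R] (t : R) {k : ℕ} (hk : k ≠ 0)
    (U : R[X]) :
    derivative ((X - C t) ^ k * U) = (X - C t) ^ (k - 1) * derivCofactor t k U := by
  obtain ⟨m, rfl⟩ := Nat.exists_eq_succ_of_ne_zero hk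
  rw [derivative_mul, derivative_X_sub_C_pow, derivCofactor, Nat.succ_sub_one, pow_succ]
  ring

theorem derivCofactor_C_mul {R : Type*} [CommRing R] (t : R) (k : ℕ) (c : R) (U : R[X]) :
    derivCofactor t k (C c * U) = C c * derivCofactor t k U := by
  rw [derivCofactor, derivCofactor, derivative_C_mul]
  ring

theorem eval_derivCofactor_self {R : Type*} [CommRing R] (t : R) (k : ℕ) (U : R[X]) :
    (derivCofactor t k U).eval t = k * U.eval t := by
  simp [derivCofactor]

/-- The signed `k`-th root `(x - t) * U(x) ^ (1 / k)` of `(x - t) ^ k * U(x)`. -/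
noncomputable def signedRoot (t : ℝ) (k : ℕ) (U : ℝ[X]) (x : ℝ) : ℝ :=
  (x - t) * U.eval x ^ (k : ℝ)⁻¹

/-- The polynomial `(x - t) ^ k * U(x)` is nonnegative and vanishes to order exactly `k` at `t`,
which is its only critical point. The last condition is encoded, together with the sign of the
derivative on both sides of `t`, by the positivity of `derivCofactor`. -/
structure IsMinCofactor (t : ℝ) (k : ℕ) (U : ℝ[X]) : Prop where
  ne_zero : k ≠ 0
  even : Even k
  eval_pos : ∀ x, 0 < U.eval x
  eval_derivCofactor_pos : ∀ x, 0 < (derivCofactor t k U).eval x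

namespace IsMinCofactor

variable {t s : ℝ} {k : ℕ} {U V : ℝ[X]}

theorem C_mul (hU : IsMinCofactor t k U) {c : ℝ} (hc : 0 < c) : IsMinCofactor t k (C c * U) where
  ne_zero := hU.ne_zero
  even := hU.even
  eval_pos x := by simpa only [eval_C_mul] using mul_pos hc (hU.eval_pos x)
  eval_derivCofactor_pos x := by
    simpa only [derivCofactor_C_mul, eval_C_mul] using mul_pos hc (hU.eval_derivCofactor_pos x)

theorem cofactor_ne_zero (hU : IsMinCofactor t k U) : U ≠ 0 := by
  rintro rfl
  simpa using hU.eval_pos 0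

theorem natDegree_derivCofactor (hU : IsMinCofactor t k U) :
    (derivCofactor t k U).natDegree = U.natDegree := by
  have hW : derivCofactor t k U ≠ 0 := by
    intro h
    simpa [h] using hU.eval_derivCofactor_pos 0
  have h := natDegree_derivative ((X - C t) ^ k * U)
  rw [derivative_X_sub_C_pow_mul t hU.ne_zero, natDegree_X_sub_C_pow_mul t _ hW,
    natDegree_X_sub_C_pow_mul t _ hU.cofactor_ne_zero] at h
  have := hU.ne_zero
  lia

theorem signedRoot_pow (hU : IsMinCofactor t k U) (x : ℝ) :
    signedRoot t k U x ^ k = (x - t) ^ k * U.eval x := by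
  rw [signedRoot, mul_pow, Real.rpow_inv_natCast_pow (hU.eval_pos x).le hU.ne_zero]

theorem hasDerivAt_signedRoot (hU : IsMinCofactor t k U) (x : ℝ) :
    HasDerivAt (signedRoot t k U)
      (U.eval x ^ (k : ℝ)⁻¹ * ((derivCofactor t k U).eval x / (k * U.eval x))) x := by
  have hUx := (hU.eval_pos x).ne'
  have hk : (k : ℝ) ≠ 0 := Nat.cast_ne_zero.mpr hU.ne_zero
  convert! ((hasDerivAt_id x).sub_const t).mul
    ((U.hasDerivAt x).rpow_const (p := (k : ℝ)⁻¹) (.inl hUx)) using 1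
  rw [Real.rpow_sub_one hUx]
  simp only [derivCofactor, eval_add, eval_mul, eval_C, eval_sub, eval_X, id_eq]
  field_simp

theorem deriv_signedRoot_pos (hU : IsMinCofactor t k U) (x : ℝ) :
    0 < deriv (signedRoot t k U) x := by
  rw [(hU.hasDerivAt_signedRoot x).deriv]
  have := hU.eval_pos x
  have := hU.eval_derivCofactor_pos x
  have := Nat.pos_of_ne_zero hU.ne_zero
  positivity

theorem differentiable_signedRoot (hU : IsMinCofactor t k U) :
    Differentiable ℝ (signedRoot t k U) :=
  fun x ↦ (hU.hasDerivAt_signedRoot x).differentiableAt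

theorem exists_le_rpow_eval (hU : IsMinCofactor t k U) :
    ∃ m : ℝ, 0 < m ∧ ∀ x, m ≤ U.eval x ^ (k : ℝ)⁻¹ := by
  obtain ⟨A, hA, hle⟩ := exists_eval_le_mul_eval (P := 1) hU.eval_pos (by simp)
  refine ⟨A⁻¹ ^ (k : ℝ)⁻¹, by positivity, fun x ↦ ?_⟩
  refine Real.rpow_le_rpow (by positivity) ?_ (by positivity)
  simpa [inv_le_iff_one_le_mul₀' hA] using hle x

theorem surjective_signedRoot (hU : IsMinCofactor t k U) :
    Function.Surjective (signedRoot t k U) := by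
  obtain ⟨m, hm, hle⟩ := hU.exists_le_rpow_eval
  refine hU.differentiable_signedRoot.continuous.surjective ?_ ?_
  · refine tendsto_atTop_mono' _ ?_
      ((tendsto_atTop_add_const_right _ (-t) tendsto_id).atTop_mul_const hm)
    filter_upwards [eventually_ge_atTop t] with x hx
    exact mul_le_mul_of_nonneg_left (hle x) (sub_nonneg.mpr hx)
  · refine tendsto_atBot_mono' _ ?_
      ((tendsto_atBot_add_const_right _ (-t) tendsto_id).atBot_mul_const hm)
    filter_upwards [eventually_le_atBot t] with x hx
    exact mul_le_mul_of_nonpos_left (hle x) (sub_nonpos.mpr hx)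

/-- `signedRoot` as an increasing bijection of the real line; composing one of these with the
inverse of another gives the bi-Lipschitz change of variable. -/
noncomputable def signedRootIso (hU : IsMinCofactor t k U) : ℝ ≃o ℝ :=
  (strictMono_of_deriv_pos hU.deriv_signedRoot_pos).orderIsoOfSurjective _ hU.surjective_signedRoot

theorem exists_deriv_signedRoot_le (hU : IsMinCofactor t k U) :
    ∃ A : ℝ, 0 < A ∧ ∀ x, deriv (signedRoot t k U) x ≤ A * U.eval x ^ (k : ℝ)⁻¹ := by
  obtain ⟨A, hA, hle⟩ := exists_eval_le_mul_eval hU.eval_pos hU.natDegree_derivCofactor.le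
  have hk : (0 : ℝ) < k := Nat.cast_pos.mpr (Nat.pos_of_ne_zero hU.ne_zero)
  refine ⟨A / k, by positivity, fun x ↦ ?_⟩
  have hUx := hU.eval_pos x
  rw [(hU.hasDerivAt_signedRoot x).deriv, mul_comm]
  refine mul_le_mul_of_nonneg_right ?_ (by positivity)
  rw [div_le_div_iff₀ (by positivity) hk]
  linarith [mul_le_mul_of_nonneg_left (hle x) hk.le]

theorem exists_rpow_eval_le_deriv_signedRoot (hU : IsMinCofactor t k U) :
    ∃ A : ℝ, 0 < A ∧ ∀ x, U.eval x ^ (k : ℝ)⁻¹ ≤ A * deriv (signedRoot t k U) x := by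
  obtain ⟨A, hA, hle⟩ :=
    exists_eval_le_mul_eval hU.eval_derivCofactor_pos hU.natDegree_derivCofactor.ge
  have hk : (0 : ℝ) < k := Nat.cast_pos.mpr (Nat.pos_of_ne_zero hU.ne_zero)
  refine ⟨k * A, by positivity, fun x ↦ ?_⟩
  have hUx := hU.eval_pos x
  rw [(hU.hasDerivAt_signedRoot x).deriv, mul_left_comm]
  refine le_mul_of_one_le_right (by positivity) ?_
  rw [mul_div_assoc', one_le_div (by positivity), mul_assoc]
  exact mul_le_mul_of_nonneg_left (hle x) hk.le

theorem eval_one_add_pow_mul_pos (hU : IsMinCofactor t k U) (x : ℝ) :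
    0 < (1 + (X - C t) ^ k * U).eval x := by
  have := hU.eval_pos x
  have := hU.even.pow_nonneg (x - t)
  simp only [eval_add, eval_one, eval_mul, eval_pow, eval_sub, eval_X, eval_C]
  positivity

theorem natDegree_one_add_pow_mul (hU : IsMinCofactor t k U) :
    (1 + (X - C t) ^ k * U).natDegree = k + U.natDegree := by
  rw [← C_1, natDegree_C_add, natDegree_X_sub_C_pow_mul t k hU.cofactor_ne_zero]

/- With `u = (x - t) ^ k * U` and `e = deg U`, the polynomials `U ^ (k + e)` and `(1 + u) ^ e` have
the same degree, so the size of `U(x)` is determined by the value `u(x)`. -/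
theorem exists_eval_le_of_pow_mul_eq (hU : IsMinCofactor t k U) (hV : IsMinCofactor s k V)
    (hdeg : U.natDegree = V.natDegree) :
    ∃ A : ℝ, 0 < A ∧ ∀ x y, (x - t) ^ k * U.eval x = (y - s) ^ k * V.eval y →
      U.eval x ≤ A * V.eval y := by
  set e := U.natDegree with he
  obtain ⟨A, hA, hle⟩ := exists_eval_le_mul_eval (P := U ^ (k + e))
    (Q := (1 + (X - C t) ^ k * U) ^ e) (fun x ↦ by
      rw [eval_pow]; exact pow_pos (hU.eval_one_add_pow_mul_pos x) e)
    (by rw [natDegree_pow, natDegree_pow, hU.natDegree_one_add_pow_mul, ← he, mul_comm])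
  obtain ⟨B, hB, hle'⟩ := exists_eval_le_mul_eval (P := (1 + (X - C s) ^ k * V) ^ e)
    (Q := V ^ (k + e)) (fun x ↦ by
      rw [eval_pow]; exact pow_pos (hV.eval_pos x) _)
    (by rw [natDegree_pow, natDegree_pow, hV.natDegree_one_add_pow_mul, ← hdeg, mul_comm])
  simp only [eval_pow, eval_add, eval_one, eval_mul, eval_sub, eval_X, eval_C] at hle hle'
  have hke : k + e ≠ 0 := by have := hU.ne_zero; lia
  refine ⟨max (A * B) 1, by positivity, fun x y hxy ↦ ?_⟩
  have hVy := hV.eval_pos y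
  refine le_of_pow_le_pow_left₀ hke (by positivity) ?_
  calc U.eval x ^ (k + e)
      ≤ A * (1 + (y - s) ^ k * V.eval y) ^ e := hxy ▸ hle x
    _ ≤ A * (B * V.eval y ^ (k + e)) := mul_le_mul_of_nonneg_left (hle' y) hA.le
    _ = A * B * V.eval y ^ (k + e) := (mul_assoc _ _ _).symm
    _ ≤ max (A * B) 1 ^ (k + e) * V.eval y ^ (k + e) := by
      gcongr
      exact (le_max_left _ _).trans (le_self_pow₀ (le_max_right _ _) hke)
    _ = (max (A * B) 1 * V.eval y) ^ (k + e) := (mul_pow _ _ _).symm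

theorem exists_deriv_signedRoot_le_of_signedRoot_eq (hU : IsMinCofactor t k U)
    (hV : IsMinCofactor s k V) (hdeg : U.natDegree = V.natDegree) :
    ∃ A : ℝ, 0 < A ∧ ∀ x y, signedRoot t k U x = signedRoot s k V y →
      deriv (signedRoot t k U) x ≤ A * deriv (signedRoot s k V) y := by
  obtain ⟨A, hA, hle⟩ := hU.exists_deriv_signedRoot_le
  obtain ⟨B, hB, hle'⟩ := hV.exists_rpow_eval_le_deriv_signedRoot
  obtain ⟨M, hM, hUV⟩ := hU.exists_eval_le_of_pow_mul_eq hV hdeg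
  refine ⟨A * (M ^ (k : ℝ)⁻¹ * B), by positivity, fun x y hxy ↦ ?_⟩
  have hVy := hV.eval_pos y
  have hvalue : U.eval x ≤ M * V.eval y :=
    hUV x y (by rw [← hU.signedRoot_pow, ← hV.signedRoot_pow, hxy])
  calc deriv (signedRoot t k U) x
      ≤ A * U.eval x ^ (k : ℝ)⁻¹ := hle x
    _ ≤ A * (M * V.eval y) ^ (k : ℝ)⁻¹ := by
      gcongr
      exact (hU.eval_pos x).le
    _ = A * (M ^ (k : ℝ)⁻¹ * V.eval y ^ (k : ℝ)⁻¹) := by rw [Real.mul_rpow hM.le hVy.le]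
    _ ≤ A * (M ^ (k : ℝ)⁻¹ * (B * deriv (signedRoot s k V) y)) := by gcongr; exact hle' y
    _ = A * (M ^ (k : ℝ)⁻¹ * B) * deriv (signedRoot s k V) y := by ring

theorem exists_lipschitzWith_symm_comp (hU : IsMinCofactor t k U) (hV : IsMinCofactor s k V)
    (hdeg : U.natDegree = V.natDegree) :
    ∃ K : ℝ≥0, LipschitzWith K (hV.signedRootIso.symm ∘ hU.signedRootIso) := by
  obtain ⟨A, hA, hle⟩ := hU.exists_deriv_signedRoot_le_of_signedRoot_eq hV hdeg
  refine ⟨⟨A, hA.le⟩, lipschitzWith_symm_comp hU.differentiable_signedRoot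
    hV.deriv_signedRoot_pos fun x y hxy ↦ ?_⟩
  exact (abs_of_pos (hU.deriv_signedRoot_pos x)).trans_le (hle x y hxy)

theorem lipschitzEquivFun (hU : IsMinCofactor t k U) (hV : IsMinCofactor s k V)
    (hdeg : U.natDegree = V.natDegree) (a : ℝ) {c : ℝ} (hc : 0 < c) :
    LipschitzEquivFun (fun x ↦ a + (x - t) ^ k * U.eval x)
      (fun y ↦ c * a + (y - s) ^ k * V.eval y) := by
  have hcU := hU.C_mul hc
  have hcdeg : (C c * U).natDegree = V.natDegree := by rw [natDegree_C_mul hc.ne', hdeg]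
  obtain ⟨K, hK⟩ := hcU.exists_lipschitzWith_symm_comp hV hcdeg
  obtain ⟨L, hL⟩ := hV.exists_lipschitzWith_symm_comp hcU hcdeg.symm
  refine .of_equiv (hcU.signedRootIso.trans hV.signedRootIso.symm).toEquiv hK hL hc fun x ↦ ?_
  set y := hV.signedRootIso.symm (hcU.signedRootIso x)
  have hroot : signedRoot s k V y = signedRoot t k (C c * U) x :=
    hV.signedRootIso.apply_symm_apply _
  have hpow : (y - s) ^ k * V.eval y = c * ((x - t) ^ k * U.eval x) := by
    rw [← hV.signedRoot_pow, hroot, hcU.signedRoot_pow, eval_C_mul, mul_left_comm]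
  change c * a + (y - s) ^ k * V.eval y = c * (a + (x - t) ^ k * U.eval x)
  rw [hpow, mul_add]

end IsMinCofactor

theorem natDegree_ne_zero_of_derivative_eval_eq_zero_imp {R : Type*} [Ring R] [Nontrivial R]
    {p : R[X]} {t : R} (hcrit : ∀ x, p.derivative.eval x = 0 → x = t) : p.natDegree ≠ 0 := by
  intro h
  have ht : t + 1 = t := hcrit _ (by rw [derivative_of_natDegree_zero h, eval_zero])
  exact one_ne_zero (add_eq_left.mp ht)

theorem derivative_eval_eq_zero_of_forall_le {p : ℝ[X]} {t : ℝ}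
    (hmin : ∀ x, p.eval t ≤ p.eval x) : p.derivative.eval t = 0 := by
  rw [← Polynomial.deriv]
  exact IsLocalMin.deriv_eq_zero (.of_forall hmin)

theorem eval_pos_of_forall_ne_zero {P : ℝ[X]} (hP : ∀ x, P.eval x ≠ 0) {a : ℝ}
    (ha : 0 < P.eval a) (x : ℝ) : 0 < P.eval x :=
  isPreconnected_univ.lt_of_ne P.continuous.continuousOn (fun y _ ↦ hP y) ⟨a, trivial, ha⟩ trivial

theorem isMinCofactor_of_forall_le {p U : ℝ[X]} {t : ℝ} {k : ℕ} (hk : k ≠ 0)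
    (hp : p = C (p.eval t) + (X - C t) ^ k * U) (hUt : U.eval t ≠ 0)
    (hcrit : ∀ x, p.derivative.eval x = 0 → x = t) (hmin : ∀ x, p.eval t ≤ p.eval x) :
    IsMinCofactor t k U := by
  have hval (x : ℝ) : p.eval x = p.eval t + (x - t) ^ k * U.eval x := by
    conv_lhs => rw [hp]
    simp
  have hUne (x : ℝ) : U.eval x ≠ 0 := by
    intro h
    have hx : p.eval x = p.eval t := by rw [hval x, h, mul_zero, add_zero]
    have hxt := hcrit x (derivative_eval_eq_zero_of_forall_le fun y ↦ hx ▸ hmin y)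
    exact hUt (hxt ▸ h)
  have hnonneg (x : ℝ) : 0 ≤ (x - t) ^ k * U.eval x := by linarith [hmin x, hval x]
  have hUpos : ∀ x, 0 < U.eval x := by
    refine eval_pos_of_forall_ne_zero hUne (a := t + 1) ((hUne _).lt_of_le' ?_)
    simpa using hnonneg (t + 1)
  have hWne (x : ℝ) : (derivCofactor t k U).eval x ≠ 0 := by
    intro h
    have hx : x = t := hcrit x <| by
      rw [hp, derivative_add, derivative_C, zero_add, derivative_X_sub_C_pow_mul t hk, eval_mul, h,
        mul_zero]
    rw [hx, eval_derivCofactor_self] at h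
    exact mul_ne_zero (Nat.cast_ne_zero.mpr hk) hUt h
  refine ⟨hk, ?_, hUpos, eval_pos_of_forall_ne_zero hWne (a := t) ?_⟩
  · by_contra hodd
    have h := hnonneg (t - 1)
    rw [sub_sub_cancel_left, (Nat.not_even_iff_odd.mp hodd).neg_one_pow] at h
    linarith [hUpos (t - 1)]
  · rw [eval_derivCofactor_self]
    exact mul_pos (Nat.cast_pos.mpr (Nat.pos_of_ne_zero hk)) (hUpos t)

theorem exists_isMinCofactor {p : ℝ[X]} {t : ℝ} (hcrit : ∀ x, p.derivative.eval x = 0 → x = t)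
    (hmin : ∀ x, p.eval t ≤ p.eval x) :
    ∃ U, IsMinCofactor t (multAt (fun x ↦ p.eval x) t) U ∧
      p = C (p.eval t) + (X - C t) ^ multAt (fun x ↦ p.eval x) t * U := by
  have hdeg := natDegree_ne_zero_of_derivative_eval_eq_zero_imp hcrit
  have hq0 : p - C (p.eval t) ≠ 0 := fun h ↦ hdeg <| by rw [sub_eq_zero.mp h, natDegree_C]
  obtain ⟨U, hU, hndvd⟩ := exists_eq_pow_rootMultiplicity_mul_and_not_dvd _ hq0 t
  have hk : rootMultiplicity t (p - C (p.eval t)) ≠ 0 :=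
    ((rootMultiplicity_pos hq0).mpr (by simp)).ne'
  rw [← multAt_eval hdeg t] at hU hk
  rw [dvd_iff_isRoot] at hndvd
  have hp := sub_eq_iff_eq_add'.mp hU
  exact ⟨U, isMinCofactor_of_forall_le hk hp hndvd hcrit hmin, hp⟩

theorem lipschitzEquivFun_of_forall_le {p q : ℝ[X]} {t s c : ℝ} (hdeg : p.natDegree = q.natDegree)
    (hp : ∀ x, p.derivative.eval x = 0 → x = t) (hq : ∀ x, q.derivative.eval x = 0 → x = s)
    (hmult : multAt (fun x ↦ p.eval x) t = multAt (fun x ↦ q.eval x) s)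
    (hc : 0 < c) (hval : q.eval s = c * p.eval t)
    (hpmin : ∀ x, p.eval t ≤ p.eval x) (hqmin : ∀ x, q.eval s ≤ q.eval x) :
    LipschitzEquivFun (fun x ↦ p.eval x) (fun x ↦ q.eval x) := by
  obtain ⟨U, hU, hpU⟩ := exists_isMinCofactor hp hpmin
  obtain ⟨V, hV, hqV⟩ := exists_isMinCofactor hq hqmin
  rw [← hmult] at hV hqV
  set k := multAt (fun x ↦ p.eval x) t
  have hUV : U.natDegree = V.natDegree := by
    rw [hpU, hqV, natDegree_C_add, natDegree_C_add,
      natDegree_X_sub_C_pow_mul t k hU.cofactor_ne_zero,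
      natDegree_X_sub_C_pow_mul s k hV.cofactor_ne_zero] at hdeg
    exact Nat.add_left_cancel hdeg
  have hpval (x : ℝ) : p.eval x = p.eval t + (x - t) ^ k * U.eval x := by
    conv_lhs => rw [hpU]
    simp
  have hqval (x : ℝ) : q.eval x = c * p.eval t + (x - s) ^ k * V.eval x := by
    conv_lhs => rw [hqV, hval]
    simp
  rw [funext hpval, funext hqval]
  exact hU.lipschitzEquivFun hV hUV (p.eval t) hc

theorem lipschitzEquivFun_of_forall_ge {p q : ℝ[X]} {t s c : ℝ} (hdeg : p.natDegree = q.natDegree)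
    (hp : ∀ x, p.derivative.eval x = 0 → x = t) (hq : ∀ x, q.derivative.eval x = 0 → x = s)
    (hmult : multAt (fun x ↦ p.eval x) t = multAt (fun x ↦ q.eval x) s)
    (hc : 0 < c) (hval : q.eval s = c * p.eval t)
    (hpmax : ∀ x, p.eval x ≤ p.eval t) (hqmax : ∀ x, q.eval x ≤ q.eval s) :
    LipschitzEquivFun (fun x ↦ p.eval x) (fun x ↦ q.eval x) := by
  have h : LipschitzEquivFun (fun x ↦ (-p).eval x) (fun x ↦ (-q).eval x) :=
    lipschitzEquivFun_of_forall_le (t := t) (s := s) (by simpa using hdeg) (by simpa using hp)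
      (by simpa using hq) (by simpa only [← neg_fun_eval, multAt_neg] using hmult) hc
      (by simp [hval]) (by simpa using hpmax) (by simpa using hqmax)
  simpa only [neg_fun_eval, neg_neg] using h.neg

theorem exists_forall_eval_le_of_leadingCoeff_pos {p : ℝ[X]} (hdeg : p.natDegree ≠ 0)
    (heven : Even p.natDegree) (hlead : 0 < p.leadingCoeff) : ∃ t, ∀ x, p.eval t ≤ p.eval x := by
  have htop : Tendsto (fun x ↦ p.eval x) atTop atTop :=
    p.tendsto_atTop_of_leadingCoeff_nonneg (natDegree_pos_iff_degree_pos.mp hdeg.bot_lt) hlead.le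
  have hbot : Tendsto (fun x ↦ p.eval x) atBot atTop := by
    have hcomp : Tendsto (fun x ↦ (p.comp (-X)).eval x) atTop atTop := by
      refine tendsto_atTop_of_leadingCoeff_nonneg _ (natDegree_pos_iff_degree_pos.mp ?_) ?_
      · rw [natDegree_comp, natDegree_neg, natDegree_X, mul_one]
        exact hdeg.bot_lt
      · rw [comp_neg_X_leadingCoeff_eq, heven.neg_one_pow, one_mul]
        exact hlead.le
    exact (hcomp.comp tendsto_neg_atBot_atTop).congr fun x ↦ by simp
  exact p.continuous.exists_forall_le (by rw [cocompact_eq_atBot_atTop]; exact hbot.sup htop)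

theorem forall_eval_le_of_leadingCoeff_pos {p : ℝ[X]} {t : ℝ} (heven : Even p.natDegree)
    (hcrit : ∀ x, p.derivative.eval x = 0 → x = t) (hlead : 0 < p.leadingCoeff) (x : ℝ) :
    p.eval t ≤ p.eval x := by
  obtain ⟨t', ht'⟩ := exists_forall_eval_le_of_leadingCoeff_pos
    (natDegree_ne_zero_of_derivative_eval_eq_zero_imp hcrit) heven hlead
  exact hcrit t' (derivative_eval_eq_zero_of_forall_le ht') ▸ ht' x

theorem forall_eval_le_or_forall_eval_ge {p : ℝ[X]} {t : ℝ} (heven : Even p.natDegree)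
    (hcrit : ∀ x, p.derivative.eval x = 0 → x = t) :
    (∀ x, p.eval t ≤ p.eval x) ∨ ∀ x, p.eval x ≤ p.eval t := by
  have hp0 : p ≠ 0 := by
    rintro rfl
    exact natDegree_ne_zero_of_derivative_eval_eq_zero_imp hcrit natDegree_zero
  rcases (leadingCoeff_ne_zero.mpr hp0).lt_or_gt with hneg | hpos
  · right
    intro x
    simpa using forall_eval_le_of_leadingCoeff_pos (p := -p) (t := t) (by simpa using heven)
      (by simpa using hcrit) (by simpa using hneg) x
  · exact .inl (forall_eval_le_of_leadingCoeff_pos heven hcrit hpos)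

theorem forall_eval_le_of_lipschitzEquivFun {f : ℝ → ℝ} {q : ℝ[X]} {t s : ℝ}
    (h : LipschitzEquivFun f fun x ↦ q.eval x) (hcrit : ∀ x, q.derivative.eval x = 0 → x = s)
    (hmin : ∀ x, f t ≤ f x) (y : ℝ) : q.eval s ≤ q.eval y := by
  obtain ⟨s', hs'⟩ := h.exists_forall_le hmin
  exact hcrit s' (derivative_eval_eq_zero_of_forall_le hs') ▸ hs' y

theorem forall_eval_ge_of_lipschitzEquivFun {f : ℝ → ℝ} {q : ℝ[X]} {t s : ℝ}
    (h : LipschitzEquivFun f fun x ↦ q.eval x) (hcrit : ∀ x, q.derivative.eval x = 0 → x = s)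
    (hmax : ∀ x, f x ≤ f t) (y : ℝ) : q.eval y ≤ q.eval s := by
  have hneg : LipschitzEquivFun (-f) fun x ↦ (-q).eval x := neg_fun_eval q ▸ h.neg
  simpa using forall_eval_le_of_lipschitzEquivFun (t := t) (s := s) hneg (by simpa using hcrit)
    (fun x ↦ neg_le_neg (hmax x)) y

theorem exists_pos_eq_mul_of_same_sign {K : Type*} [Field K] [LinearOrder K] [IsStrictOrderedRing K]
    {a b : K} (h : (0 < a ∧ 0 < b) ∨ (a < 0 ∧ b < 0) ∨ (a = 0 ∧ b = 0)) :
    ∃ c, 0 < c ∧ b = c * a := by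
  rcases h with ⟨ha, hb⟩ | ⟨ha, hb⟩ | ⟨rfl, rfl⟩
  · exact ⟨b / a, div_pos hb ha, (div_mul_cancel₀ b ha.ne').symm⟩
  · exact ⟨b / a, div_pos_of_neg_of_neg hb ha, (div_mul_cancel₀ b ha.ne).symm⟩
  · exact ⟨1, one_pos, (mul_zero 1).symm⟩

end

/-- Two polynomial functions of the same even degree `d ≥ 1`, each with exactly one
critical point, of the same multiplicity `k`, and with values of the same sign at the
critical points, are Lipschitz equivalent iff the critical points are both global
minimum points or both global maximum points. -/
theorem stmt_4 (p q : Polynomial ℝ) (d : ℕ) (hd : 1 ≤ d) (heven : Even d)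
    (hp : p.natDegree = d) (hq : q.natDegree = d)
    (t₀ s₀ : ℝ) (k : ℕ)
    (ht₀ : ∀ t : ℝ, p.derivative.eval t = 0 ↔ t = t₀)
    (hs₀ : ∀ t : ℝ, q.derivative.eval t = 0 ↔ t = s₀)
    (hkf : multAt (fun x => p.eval x) t₀ = k)
    (hkg : multAt (fun x => q.eval x) s₀ = k)
    (hsign : (0 < p.eval t₀ ∧ 0 < q.eval s₀) ∨ (p.eval t₀ < 0 ∧ q.eval s₀ < 0) ∨
      (p.eval t₀ = 0 ∧ q.eval s₀ = 0)) :
    LipschitzEquivFun (fun x => p.eval x) (fun x => q.eval x) ↔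
      ((∀ t : ℝ, p.eval t₀ ≤ p.eval t) ∧ (∀ t : ℝ, q.eval s₀ ≤ q.eval t)) ∨
      ((∀ t : ℝ, p.eval t ≤ p.eval t₀) ∧ (∀ t : ℝ, q.eval t ≤ q.eval s₀)) := by
  constructor
  · intro h
    refine (forall_eval_le_or_forall_eval_ge (hp ▸ heven) fun x ↦ (ht₀ x).mp).imp ?_ ?_
    · exact fun hmin ↦ ⟨hmin, forall_eval_le_of_lipschitzEquivFun h (fun x ↦ (hs₀ x).mp) hmin⟩
    · exact fun hmax ↦ ⟨hmax, forall_eval_ge_of_lipschitzEquivFun h (fun x ↦ (hs₀ x).mp) hmax⟩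
  · have hdeg := hp.trans hq.symm
    have hmult := hkf.trans hkg.symm
    obtain ⟨c, hc, hval⟩ := exists_pos_eq_mul_of_same_sign hsign
    rintro (⟨hpmin, hqmin⟩ | ⟨hpmax, hqmax⟩)
    · exact lipschitzEquivFun_of_forall_le hdeg (fun x ↦ (ht₀ x).mp) (fun x ↦ (hs₀ x).mp) hmult hc
        hval hpmin hqmin
    · exact lipschitzEquivFun_of_forall_ge hdeg (fun x ↦ (ht₀ x).mp) (fun x ↦ (hs₀ x).mp) hmult hc
        hval hpmax hqmax
end

section
/- Let φ : ℝ → ℝ be a bi-Lipschitz homeomorphism such that g ∘ φ = f for some nonconstant real polynomial functions f, g : ℝ → ℝ, let λ be a nonzero real number, and let β be a rational number with β > 1. Define Φ on the open right half-plane H = {(x, y) ∈ ℝ² : x > 0} by Φ(x, y) := (λ·x, |λ|^β · x^β · φ(y·x^{−β})) (equivalently, Φ(x, t·x^β) = (λ·x, |λ|^β·φ(t)·x^β) for all x > 0 and t ∈ ℝ). Then for every δ > 0, Φ is Lipschitz on the strip {(x, y) ∈ ℝ² : 0 < x < δ}. -/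
open Filter Topology

/-!
In the coordinates `(u, y) = (x ^ β, y)` the second component of `Φ` is, up to a constant factor,
the degree-one homogeneous extension `u * φ (y / u)` of `φ`. Since `x ↦ x ^ β` is Lipschitz on
`(0, δ)`, it suffices that this extension is Lipschitz on `u > 0`. In `y` it inherits the Lipschitz
constant of `φ`; its `u`-derivative is `φ t - t * φ' t` at `t = y / u`, so what is needed is that
this quantity is bounded near infinity. There `φ` is differentiable with
`φ' = p' / (q' ∘ φ)`, and multiplying by `q' (φ t)` gives `(φ q' (φ) - n q (φ)) - (t p' - n p)`
because `q ∘ φ = p`. As `φ` grows linearly, `p` and `q` have the same degree `n`; subtracting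
`n q (φ) = n p` cancels the leading terms, which leaves `O(t ^ (n - 1))`, the order of `q' (φ t)`.
-/

open Asymptotics Bornology
open scoped NNReal

theorem lipschitzOnWith_uncurry {α β γ : Type*} [PseudoEMetricSpace α] [PseudoEMetricSpace β]
    [PseudoEMetricSpace γ] {f : α → β → γ} {s : Set α} {t : Set β} {K L : ℝ≥0}
    (hs : ∀ b ∈ t, LipschitzOnWith K (f · b) s) (ht : ∀ a ∈ s, LipschitzOnWith L (f a) t) :
    LipschitzOnWith (K + L) (Function.uncurry f) (s ×ˢ t) := by
  rintro ⟨a₁, b₁⟩ ⟨ha₁, hb₁⟩ ⟨a₂, b₂⟩ ⟨ha₂, hb₂⟩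
  simp only [Function.uncurry, ENNReal.coe_add, add_mul]
  calc edist (f a₁ b₁) (f a₂ b₂)
      ≤ edist (f a₁ b₁) (f a₂ b₁) + edist (f a₂ b₁) (f a₂ b₂) := edist_triangle _ _ _
    _ ≤ K * edist a₁ a₂ + L * edist b₁ b₂ := add_le_add (hs b₁ hb₁ ha₁ ha₂) (ht a₂ ha₂ hb₁ hb₂)
    _ ≤ K * edist (a₁, b₁) (a₂, b₂) + L * edist (a₁, b₁) (a₂, b₂) := by
      gcongr
      exacts [le_max_left _ _, le_max_right _ _]

section Perspective

variable {E F : Type*} [NormedAddCommGroup E] [NormedSpace ℝ E]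
  [NormedAddCommGroup F] [NormedSpace ℝ F] {φ : E → F} {K : ℝ≥0}

/-- The perspective of `φ`: its extension from `{1} × E` to a map on `(0, ∞) × E` that is positively
homogeneous of degree one. Only the values at `u > 0` are meaningful. -/
noncomputable def perspective (φ : E → F) (u : ℝ) (y : E) : F := u • φ (u⁻¹ • y)

theorem lipschitzWith_perspective (hφ : LipschitzWith K φ) {u : ℝ} (hu : u ≠ 0) :
    LipschitzWith K (perspective φ u) := by
  have hcomp := (lipschitzWith_smul u).comp (hφ.comp (lipschitzWith_smul (β := E) u⁻¹))
  have hconst : ‖u‖₊ * (K * ‖u⁻¹‖₊) = K := by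
    rw [nnnorm_inv, mul_left_comm, mul_inv_cancel₀ (nnnorm_ne_zero_iff.2 hu), mul_one]
  rwa [hconst] at hcomp

theorem hasDerivAt_perspective {φ' : E →L[ℝ] F} {u : ℝ} {y : E} (hu : u ≠ 0)
    (hφ : HasFDerivAt φ φ' (u⁻¹ • y)) :
    HasDerivAt (perspective φ · y) (φ (u⁻¹ • y) - φ' (u⁻¹ • y)) u := by
  have hinner : HasDerivAt (fun v : ℝ => v⁻¹ • y) (-(u ^ 2)⁻¹ • y) u :=
    (hasDerivAt_inv hu).smul_const y
  refine ((hasDerivAt_id u).smul (hφ.comp_hasDerivAt u hinner)).congr_deriv ?_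
  have hcoeff : u * -(u ^ 2)⁻¹ = -u⁻¹ := by field_simp
  rw [id, one_smul, ← map_smul, smul_smul, hcoeff, neg_smul, map_neg, Function.comp_apply]
  abel

theorem norm_perspective_sub_perspective_le (hφ : LipschitzWith K φ) {u v R : ℝ} {y : E}
    (hu : u ≠ 0) (hv : v ≠ 0) (hR : ‖v⁻¹ • y‖ ≤ R) :
    ‖perspective φ u y - perspective φ v y‖ ≤ (2 * K * R + ‖φ 0‖) * |u - v| := by
  have hsplit : perspective φ u y - perspective φ v y
      = u • (φ (u⁻¹ • y) - φ (v⁻¹ • y)) + (u - v) • φ (v⁻¹ • y) := by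
    rw [perspective, perspective]; module
  have hscale : u • (u⁻¹ • y - v⁻¹ • y) = -((u - v) • v⁻¹ • y) := by
    match_scalars; field_simp; ring
  have hfirst : ‖u • (φ (u⁻¹ • y) - φ (v⁻¹ • y))‖ ≤ K * (|u - v| * R) :=
    calc ‖u • (φ (u⁻¹ • y) - φ (v⁻¹ • y))‖ = |u| * ‖φ (u⁻¹ • y) - φ (v⁻¹ • y)‖ := norm_smul _ _
      _ ≤ |u| * (K * ‖u⁻¹ • y - v⁻¹ • y‖) := by gcongr; exact hφ.norm_sub_le _ _
      _ = K * ‖u • (u⁻¹ • y - v⁻¹ • y)‖ := by rw [norm_smul, Real.norm_eq_abs]; ring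
      _ = K * (|u - v| * ‖v⁻¹ • y‖) := by rw [hscale, norm_neg, norm_smul, Real.norm_eq_abs]
      _ ≤ K * (|u - v| * R) := by gcongr
  have hvalue : ‖φ (v⁻¹ • y)‖ ≤ K * R + ‖φ 0‖ :=
    calc ‖φ (v⁻¹ • y)‖ ≤ ‖φ (v⁻¹ • y) - φ 0‖ + ‖φ 0‖ := norm_le_norm_sub_add _ _
      _ ≤ K * ‖v⁻¹ • y‖ + ‖φ 0‖ := by gcongr; simpa using hφ.norm_sub_le (v⁻¹ • y) 0
      _ ≤ K * R + ‖φ 0‖ := by gcongr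
  calc ‖perspective φ u y - perspective φ v y‖
      ≤ ‖u • (φ (u⁻¹ • y) - φ (v⁻¹ • y))‖ + ‖(u - v) • φ (v⁻¹ • y)‖ :=
        hsplit ▸ norm_add_le _ _
    _ ≤ K * (|u - v| * R) + |u - v| * (K * R + ‖φ 0‖) := by
      rw [norm_smul (u - v), Real.norm_eq_abs (u - v)]; gcongr
    _ = (2 * K * R + ‖φ 0‖) * |u - v| := by ring

theorem lipschitzOnWith_perspective_of_bound (hφ : LipschitzWith K φ) {C R : ℝ≥0}
    (hd : ∀ t, R < ‖t‖ → DifferentiableAt ℝ φ t) (hC : ∀ t, R < ‖t‖ → ‖φ t - fderiv ℝ φ t t‖ ≤ C)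
    (y : E) :
    LipschitzOnWith (max C (2 * K * R + ‖φ 0‖₊)) (perspective φ · y) (Set.Ioi 0) := by
  have hnear {u v : ℝ} (hu : 0 < u) (hv : 0 < v) (hR : ‖v⁻¹ • y‖ ≤ R) :
      ‖perspective φ u y - perspective φ v y‖
        ≤ (max C (2 * K * R + ‖φ 0‖₊) : ℝ≥0) * ‖u - v‖ :=
    (norm_perspective_sub_perspective_le hφ hu.ne' hv.ne' hR).trans <| by
      rw [Real.norm_eq_abs]; gcongr; exact_mod_cast le_max_right _ _
  set s : Set ℝ := {u | 0 < u ∧ u * R < ‖y‖}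
  have hs : Convex ℝ s :=
    (convex_Ioi 0).inter ((convex_Iio ‖y‖).is_linear_preimage (IsLinearMap.isLinearMap_smul' _))
  have hlarge {u : ℝ} (hu : 0 < u) : R < ‖u⁻¹ • y‖ ↔ u ∈ s := by
    rw [norm_smul, norm_inv, Real.norm_of_nonneg hu.le, lt_inv_mul_iff₀ hu]
    exact (and_iff_right hu).symm
  have hfar : LipschitzOnWith C (perspective φ · y) s :=
    hs.lipschitzOnWith_of_nnnorm_hasDerivWithin_le
      (fun u hu => (hasDerivAt_perspective hu.1.ne'
        (hd _ ((hlarge hu.1).2 hu)).hasFDerivAt).hasDerivWithinAt)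
      (fun u hu => hC _ ((hlarge hu.1).2 hu))
  refine LipschitzOnWith.of_dist_le_mul fun u hu v hv => ?_
  rw [dist_eq_norm, dist_eq_norm]
  rcases le_or_gt ‖v⁻¹ • y‖ R with hvR | hvR
  · exact hnear hu hv hvR
  rcases le_or_gt ‖u⁻¹ • y‖ R with huR | huR
  · rw [norm_sub_rev, norm_sub_rev u]
    exact hnear hv hu huR
  · exact (hfar.weaken (le_max_left _ _)).norm_sub_le ((hlarge hu).1 huR) ((hlarge hv).1 hvR)

theorem exists_lipschitzOnWith_perspective (hφ : LipschitzWith K φ)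
    (hd : ∀ᶠ t in cobounded E, DifferentiableAt ℝ φ t)
    (hO : (fun t => φ t - fderiv ℝ φ t t) =O[cobounded E] (fun _ => (1 : ℝ))) :
    ∃ L, LipschitzOnWith L (Function.uncurry (perspective φ)) (Set.Ioi 0 ×ˢ Set.univ) := by
  obtain ⟨C, hC⟩ := hO.bound
  simp only [norm_one, mul_one] at hC
  obtain ⟨R, -, hR⟩ := (hasBasis_cobounded_norm.eventually_iff).1 (hd.and hC)
  have hlarge {t : E} (ht : (R.toNNReal : ℝ) < ‖t‖) : R ≤ ‖t‖ :=
    (Real.le_coe_toNNReal R).trans ht.le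
  exact ⟨_, lipschitzOnWith_uncurry
    (fun y _ => lipschitzOnWith_perspective_of_bound hφ (C := C.toNNReal) (R := R.toNNReal)
      (fun t ht => (hR (hlarge ht)).1)
      (fun t ht => (hR (hlarge ht)).2.trans (Real.le_coe_toNNReal C)) y)
    (fun u hu => (lipschitzWith_perspective hφ (ne_of_gt hu)).lipschitzOnWith)⟩

end Perspective

section LinearGrowth

variable {E F : Type*} [NormedAddCommGroup E] [NormedAddCommGroup F] {φ : E → F} {K : ℝ≥0}

theorem isBigO_id_cobounded_of_lipschitzWith (hφ : LipschitzWith K φ) : φ =O[cobounded E] id := by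
  have hsub : (fun t => φ t - φ 0) =O[cobounded E] id :=
    .of_bound K (.of_forall fun t => by simpa using hφ.norm_sub_le t 0)
  simpa using hsub.add (isLittleO_const_id_cobounded (φ 0)).isBigO

theorem id_isBigO_cobounded_of_antilipschitzWith (hφ : AntilipschitzWith K φ) :
    id =O[cobounded E] φ := by
  have hsub : id =O[cobounded E] (fun t => φ t - φ 0) :=
    .of_bound K (.of_forall fun t => by simpa [dist_eq_norm] using hφ.le_mul_dist t 0)
  exact hsub.trans ((isBigO_refl φ _).sub
    ((isLittleO_const_id_cobounded (φ 0)).comp_tendsto hφ.tendsto_cobounded).isBigO)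

theorem tendsto_cobounded_of_id_isBigO (hφ : id =O[cobounded E] φ) :
    Tendsto φ (cobounded E) (cobounded F) :=
  tendsto_norm_atTop_iff_cobounded.1 <| by
    simpa only [norm_norm] using hφ.norm_norm.trans_tendsto_norm_atTop
      (by simpa only [norm_norm, id] using tendsto_norm_cobounded_atTop)

end LinearGrowth

section PolynomialSubstitution

open Polynomial

theorem natDegree_X_mul_derivative_sub_le {R : Type*} [CommRing R] (p : R[X]) :
    (X * derivative p - C (p.natDegree : R) * p).natDegree ≤ p.natDegree - 1 := by
  rw [natDegree_le_iff_coeff_eq_zero]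
  intro N hN
  obtain ⟨k, rfl⟩ : ∃ k, N = k + 1 := ⟨N - 1, by lia⟩
  rw [coeff_sub, coeff_C_mul, coeff_X_mul, coeff_derivative]
  obtain hlt | heq : p.natDegree < k + 1 ∨ p.natDegree = k + 1 := by lia
  · rw [coeff_eq_zero_of_natDegree_lt hlt]; ring
  · rw [heq]; push_cast; ring

theorem isBigO_cobounded_pow_of_natDegree_le {R : Type*} [NormedRing R] [NormMulClass R]
    {p : R[X]} {n : ℕ} (hp : p.natDegree ≤ n) : p.eval =O[cobounded R] (· ^ n) :=
  (isEquivalent_cobounded_leading_monomial.isBigO.trans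
    ((isBigO_refl _ _).const_mul_left _)).trans (isBigO_pow_pow_cobounded_of_le hp)

section NormedField

variable {𝕜 : Type*} [NormedField 𝕜] {φ : 𝕜 → 𝕜} {p q : 𝕜[X]}

theorem isTheta_cobounded_pow_natDegree (hp : p ≠ 0) :
    p.eval =Θ[cobounded 𝕜] (· ^ p.natDegree) :=
  isEquivalent_cobounded_leading_monomial.isTheta.trans
    ((isTheta_const_mul_left (leadingCoeff_ne_zero.2 hp)).2 isTheta_rfl)

theorem isTheta_eval_comp_pow_natDegree (hφ : φ =Θ[cobounded 𝕜] id) (hq : q ≠ 0) :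
    (fun t => q.eval (φ t)) =Θ[cobounded 𝕜] (· ^ q.natDegree) :=
  have hpow := isTheta_cobounded_pow_natDegree hq
  have htop := tendsto_cobounded_of_id_isBigO hφ.2
  IsTheta.trans ⟨hpow.1.comp_tendsto htop, hpow.2.comp_tendsto htop⟩ (hφ.pow _)

theorem isTheta_eval_derivative_comp [CharZero 𝕜] (hφ : φ =Θ[cobounded 𝕜] id)
    (hq : 0 < q.natDegree) :
    (fun t => q.derivative.eval (φ t)) =Θ[cobounded 𝕜] (· ^ (q.natDegree - 1)) := by
  have hq' : q.derivative ≠ 0 := fun h => hq.ne' (derivative_eq_zero.1 h)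
  simpa only [natDegree_derivative] using isTheta_eval_comp_pow_natDegree hφ hq'

theorem eventually_eval_derivative_comp_ne_zero [CharZero 𝕜] (hφ : φ =Θ[cobounded 𝕜] id)
    (hq : 0 < q.natDegree) : ∀ᶠ t in cobounded 𝕜, q.derivative.eval (φ t) ≠ 0 := by
  filter_upwards [(isTheta_eval_derivative_comp hφ hq).eq_zero_iff, eventually_ne_cobounded 0]
    with t hiff ht
  exact hiff.not.2 (pow_ne_zero _ ht)

end NormedField

variable {𝕜 : Type*} [NontriviallyNormedField 𝕜] {φ : 𝕜 → 𝕜} {p q : 𝕜[X]}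

theorem le_of_pow_isBigO_pow_cobounded {m n : ℕ}
    (h : (· ^ m : 𝕜 → 𝕜) =O[cobounded 𝕜] (· ^ n : 𝕜 → 𝕜)) : m ≤ n := by
  by_contra! hlt
  refine isLittleO_irrefl' ?_ (h.trans_isLittleO (isLittleO_pow_pow_cobounded_of_lt hlt))
  refine (eventually_ne_cobounded (0 : 𝕜)).frequently.mono fun t ht => ?_
  exact norm_ne_zero_iff.2 (pow_ne_zero m ht)

theorem natDegree_eq_of_eval_comp_eq (hφ : φ =Θ[cobounded 𝕜] id)
    (hq : q ≠ 0) (hpq : ∀ t, q.eval (φ t) = p.eval t) : p.natDegree = q.natDegree := by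
  have hcomp : p.eval =Θ[cobounded 𝕜] (· ^ q.natDegree) := by
    simpa only [hpq] using isTheta_eval_comp_pow_natDegree hφ hq
  have hp : p ≠ 0 := by
    rintro rfl
    obtain ⟨t, hzero, ht⟩ := (hcomp.2.eq_zero_imp.and (eventually_ne_cobounded 0)).exists
    exact pow_ne_zero _ ht (hzero eval_zero)
  have hpow := (isTheta_cobounded_pow_natDegree hp).symm.trans hcomp
  exact (le_of_pow_isBigO_pow_cobounded hpow.1).antisymm (le_of_pow_isBigO_pow_cobounded hpow.2)

theorem hasDerivAt_of_eval_comp_eq {t : 𝕜} (hφ : ContinuousAt φ t)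
    (hpq : ∀ s, q.eval (φ s) = p.eval s) (hne : q.derivative.eval (φ t) ≠ 0) :
    HasDerivAt φ (p.derivative.eval t / q.derivative.eval (φ t)) t :=
  .of_comp_left hφ (q.hasDerivAt _) (p.hasDerivAt _) hne (.of_forall hpq)

theorem isBigO_mul_eval_derivative_sub (hφ : φ =Θ[cobounded 𝕜] id) (hq : q ≠ 0)
    (hpq : ∀ t, q.eval (φ t) = p.eval t) :
    (fun t => φ t * q.derivative.eval (φ t) - t * p.derivative.eval t)
      =O[cobounded 𝕜] (· ^ (q.natDegree - 1)) := by
  have hdeg := natDegree_eq_of_eval_comp_eq hφ hq hpq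
  have hqO := ((isBigO_cobounded_pow_of_natDegree_le (natDegree_X_mul_derivative_sub_le q)
    ).comp_tendsto (tendsto_cobounded_of_id_isBigO hφ.2)).trans (hφ.pow _).1
  have hpO := isBigO_cobounded_pow_of_natDegree_le (natDegree_X_mul_derivative_sub_le p)
  rw [hdeg] at hpO
  refine (hqO.sub hpO).congr_left fun t => ?_
  simp only [Function.comp_apply, eval_sub, eval_mul, eval_X, eval_C, hpq]
  ring

theorem isBigO_one_sub_mul_deriv_of_eval_comp_eq [CharZero 𝕜] (hcont : Continuous φ)
    (hφ : φ =Θ[cobounded 𝕜] id) (hq : 0 < q.natDegree) (hpq : ∀ t, q.eval (φ t) = p.eval t) :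
    (fun t => φ t - t * deriv φ t) =O[cobounded 𝕜] (fun _ => (1 : ℝ)) := by
  have hnum := (isBigO_mul_eval_derivative_sub hφ (ne_zero_of_natDegree_gt hq) hpq).trans
    (isTheta_eval_derivative_comp hφ hq).2
  obtain ⟨C, hC⟩ := hnum.bound
  refine .of_bound C ?_
  filter_upwards [hC, eventually_eval_derivative_comp_ne_zero hφ hq] with t hCt hne
  have hquot : φ t - t * deriv φ t
      = (φ t * q.derivative.eval (φ t) - t * p.derivative.eval t) / q.derivative.eval (φ t) := by
    rw [(hasDerivAt_of_eval_comp_eq hcont.continuousAt hpq hne).deriv]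
    field_simp
  rwa [hquot, norm_div, norm_one, mul_one, div_le_iff₀ (norm_pos_iff.2 hne)]

end PolynomialSubstitution

theorem exists_lipschitzOnWith_perspective_of_eval_comp_eq {φ : ℝ → ℝ} {K : ℝ≥0}
    (hφ : LipschitzWith K φ) (hgrowth : id =O[cobounded ℝ] φ) {p q : Polynomial ℝ}
    (hq : 0 < q.natDegree) (hpq : ∀ t, q.eval (φ t) = p.eval t) :
    ∃ L, LipschitzOnWith L (Function.uncurry (perspective φ)) (Set.Ioi 0 ×ˢ Set.univ) := by
  have hΘ : φ =Θ[cobounded ℝ] id := ⟨isBigO_id_cobounded_of_lipschitzWith hφ, hgrowth⟩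
  refine exists_lipschitzOnWith_perspective hφ ?_ ?_
  · filter_upwards [eventually_eval_derivative_comp_ne_zero hΘ hq] with t hne
    exact (hasDerivAt_of_eval_comp_eq hφ.continuous.continuousAt hpq hne).differentiableAt
  · simpa only [fderiv_eq_smul_deriv, smul_eq_mul] using
      isBigO_one_sub_mul_deriv_of_eval_comp_eq hφ.continuous hΘ hq hpq

theorem exists_lipschitzOnWith_rpow_const {β : ℝ} (hβ : 1 ≤ β) (a b : ℝ) :
    ∃ K, LipschitzOnWith K (fun x : ℝ => x ^ β) (Set.Icc a b) :=
  (Real.contDiff_rpow_const_of_le (n := 1) (by simpa using hβ)).contDiffOn.exists_lipschitzOnWith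
    one_ne_zero (convex_Icc a b) isCompact_Icc

theorem stmt_9_general {φ : ℝ → ℝ} {K : ℝ≥0} (hφ : LipschitzWith K φ)
    (hgrowth : id =O[cobounded ℝ] φ) {p q : Polynomial ℝ} (hq : 0 < q.natDegree)
    (hpq : ∀ t, q.eval (φ t) = p.eval t) {a c β : ℝ} (hβ : 1 ≤ β) {Φ : ℝ × ℝ → ℝ × ℝ}
    (hΦ : ∀ x t : ℝ, 0 < x → Φ (x, t * x ^ β) = (a * x, c * φ t * x ^ β)) (δ : ℝ) :
    ∃ L : ℝ≥0, LipschitzOnWith L Φ {z : ℝ × ℝ | 0 < z.1 ∧ z.1 < δ} := by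
  set s : Set (ℝ × ℝ) := {z | 0 < z.1 ∧ z.1 < δ}
  have hΦ_eq : Set.EqOn Φ (fun z => (a * z.1, c * perspective φ (z.1 ^ β) z.2)) s := by
    rintro ⟨x, y⟩ ⟨hx, -⟩
    have hval := hΦ x ((x ^ β)⁻¹ * y) hx
    rw [mul_right_comm, inv_mul_cancel₀ (Real.rpow_pos_of_pos hx β).ne', one_mul] at hval
    simp only [hval, perspective, smul_eq_mul, mul_assoc, mul_comm (x ^ β)]
  obtain ⟨L, hL⟩ := exists_lipschitzOnWith_perspective_of_eval_comp_eq hφ hgrowth hq hpq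
  obtain ⟨M, hM⟩ := exists_lipschitzOnWith_rpow_const hβ 0 δ
  have hstraighten : LipschitzOnWith _ (fun z : ℝ × ℝ => (z.1 ^ β, z.2)) s :=
    (hM.comp LipschitzWith.prod_fst.lipschitzOnWith fun z hz => ⟨hz.1.le, hz.2.le⟩).prodMk
      LipschitzWith.prod_snd.lipschitzOnWith
  have hcomp := hL.comp hstraighten fun z hz => ⟨Real.rpow_pos_of_pos hz.1 β, Set.mem_univ _⟩
  have hmodel := ((lipschitzWith_smul a).comp LipschitzWith.prod_fst).lipschitzOnWith.prodMk
    ((lipschitzWith_smul c).comp_lipschitzOnWith hcomp)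
  exact ⟨_, fun z hz w hw => by rw [hΦ_eq hz, hΦ_eq hw]; exact hmodel hz hw⟩

/-- Let `φ` be a bi-Lipschitz homeomorphism of `ℝ` with `g ∘ φ = f` for nonconstant
polynomial functions `f, g`, let `λ ≠ 0` and `β > 1` rational. The map
`Φ(x, t·x^β) = (λ·x, |λ|^β·φ(t)·x^β)` on the right half-plane is Lipschitz on each
strip `{0 < x < δ}`. -/
theorem stmt_9 (φ : ℝ → ℝ) (hφbij : Function.Bijective φ)
    (hφlip : ∃ K : NNReal, LipschitzWith K φ)
    (hφinv : ∃ K : NNReal, LipschitzWith K (Function.invFun φ))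
    (p q : Polynomial ℝ) (hp : 1 ≤ p.natDegree) (hq : 1 ≤ q.natDegree)
    (hpq : ∀ t : ℝ, q.eval (φ t) = p.eval t)
    (lam : ℝ) (hlam : lam ≠ 0) (β : ℚ) (hβ : 1 < β)
    (Φ : ℝ × ℝ → ℝ × ℝ)
    (hΦ : ∀ x t : ℝ, 0 < x →
      Φ (x, t * x ^ (β : ℝ)) = (lam * x, |lam| ^ (β : ℝ) * φ t * x ^ (β : ℝ)))
    (δ : ℝ) (hδ : 0 < δ) :
    ∃ K : NNReal, LipschitzOnWith K Φ {z : ℝ × ℝ | 0 < z.1 ∧ z.1 < δ} := by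
  have hanti := hφinv.choose_spec.to_rightInverse (Function.leftInverse_invFun hφbij.injective)
  exact stmt_9_general hφlip.choose_spec (id_isBigO_cobounded_of_antilipschitzWith hanti) hq hpq
    (by exact_mod_cast hβ.le) hΦ δ
end
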